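/- Assume (Σ_n, T, (φ_n)) satisfies property (H*) with Hölder parameter r. Then for every k ∈ ℕ₀ and every r-Hölder continuous function f_k : Σ_k → ℝ, with l_k := n_k + m_{k+n_k}, one has D̄_{k+l_k}(ℒ^{l_k}_k(f_k)) ≤ t_k · D̄_k(f_k), where t_k := max{β, 1 − (1 − r^{n_k} α_k) C_{k+n_k}/B_{k+n_k}} ∈ (0,1). -/

import Mathlib

open MeasureTheory Real Filter

namespace NSShift

/-- The ambient sequence space `ℕ^ℕ`. -/
abbrev Seq := ℕ → ℕ

/-- The shift map `T`. -/
def shift (x : Seq) : Seq := fun i => x (i + 1)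

/-- Prepend one symbol to a sequence. -/
def cons (a : ℕ) (x : Seq) : Seq := fun i =>
  match i with
  | 0 => a
  | j + 1 => x j

/-- The non-stationary shift space `Σ_n` determined by alphabets `W` and
transition relations `A` (`A n i j` means `α^n_{ij} = 1`). -/
def Sig (W : ℕ → Set ℕ) (A : ℕ → ℕ → ℕ → Prop) (n : ℕ) : Set Seq :=
  {x | (∀ i, x i ∈ W (n + i)) ∧ ∀ i, A (n + i) (x i) (x (i + 1))}

/-- `x` and `y` agree in their first `k` coordinates (lie in a common `k`-cylinder). -/
def agrees (x y : Seq) (k : ℕ) : Prop := ∀ i < k, x i = y i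

open scoped Classical in
/-- The shift metric `d_r(x,y) = r^{min{i : x_i ≠ y_i}}`. -/
noncomputable def dr (r : ℝ) (x y : Seq) : ℝ :=
  if x = y then 0 else r ^ sInf {i | x i ≠ y i}

/-- `f` is locally `(r,m)`-Hölder continuous with Hölder constant `κ` of index `m` on `S`:
`V_k(f) ≤ κ r^k` for all `k ≥ m`. -/
def HolderOn (S : Set Seq) (r κ : ℝ) (m : ℕ) (f : Seq → ℝ) : Prop :=
  ∀ k, m ≤ k → ∀ x ∈ S, ∀ y ∈ S, agrees x y k → |f x - f y| ≤ κ * r ^ k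

/-- The Birkhoff sum `S_n(φ_k) = Σ_{i=0}^{n-1} φ_{k+i} ∘ T^i`. -/
noncomputable def birkhoff (φ : ℕ → Seq → ℝ) (k n : ℕ) (x : Seq) : ℝ :=
  ∑ i ∈ Finset.range n, φ (k + i) (shift^[i] x)

/-- `log B_m = Σ_{i=1}^{m} κ_{m−i} r^i`. -/
noncomputable def logB (κ : ℕ → ℝ) (r : ℝ) (m : ℕ) : ℝ :=
  ∑ i ∈ Finset.Icc 1 m, κ (m - i) * r ^ i

/-- `B_m = exp Σ_{i=1}^{m} κ_{m−i} r^i`. -/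
noncomputable def Bconst (κ : ℕ → ℝ) (r : ℝ) (m : ℕ) : ℝ := Real.exp (logB κ r m)


open scoped Classical in
/-- The Ruelle operator `ℒ_k(f)(x) = Σ_{Ty=x} e^{φ_k(y)} f(y)`, for `x ∈ Σ_{k+1}`. -/
noncomputable def Ruelle (W : ℕ → Set ℕ) (A : ℕ → ℕ → ℕ → Prop) (φ : ℕ → Seq → ℝ)
    (k : ℕ) (f : Seq → ℝ) (x : Seq) : ℝ :=
  ∑' a : ℕ, if cons a x ∈ Sig W A k then Real.exp (φ k (cons a x)) * f (cons a x) else 0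

/-- The iterated Ruelle operator `ℒ^n_k = ℒ_{k+n-1} ∘ ⋯ ∘ ℒ_k`. -/
noncomputable def RuelleIter (W : ℕ → Set ℕ) (A : ℕ → ℕ → ℕ → Prop) (φ : ℕ → Seq → ℝ)
    (k : ℕ) : ℕ → (Seq → ℝ) → Seq → ℝ
  | 0 => fun f => f
  | n + 1 => fun f => Ruelle W A φ (k + n) (RuelleIter W A φ k n f)

/-- `w` is a `k`-admissible word of length `len`. -/
def Adm (W : ℕ → Set ℕ) (A : ℕ → ℕ → ℕ → Prop) (k : ℕ) (w : ℕ → ℕ) (len : ℕ) : Prop :=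
  (∀ i < len, w i ∈ W (k + i)) ∧ ∀ i, i + 1 < len → A (k + i) (w i) (w (i + 1))

/-- Prepend the first `len` symbols of `w` to the sequence `x` (the inverse branch `τ_w`). -/
def prepend (w : ℕ → ℕ) (len : ℕ) (x : Seq) : Seq := fun i =>
  if i < len then w i else x (i - len)

/-- The Lipschitz constant of `f` on `S` with respect to the distance function `d`,
as the least constant `K ≥ 0` with `|f x − f y| ≤ K d(x,y)` on `S`. -/
noncomputable def LipC (S : Set Seq) (d : Seq → Seq → ℝ) (f : Seq → ℝ) : ℝ :=
  sInf {K : ℝ | 0 ≤ K ∧ ∀ x ∈ S, ∀ y ∈ S, |f x - f y| ≤ K * d x y}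

/-- The Vasershtein (Wasserstein) distance of two Borel measures with respect to the
cost function `d`, as the infimum of `∫ d dm` over couplings `m`. -/
noncomputable def Wass (d : Seq → Seq → ℝ) (μ ν : Measure Seq) : ℝ :=
  sInf {t : ℝ | ∃ m : Measure (Seq × Seq),
    m.map Prod.fst = μ ∧ m.map Prod.snd = ν ∧ t = ∫ p, d p.1 p.2 ∂m}

/-- The dual Ruelle operator `ℒ^*_k` on Borel measures, satisfying
`∫ f d(ℒ^*_k μ) = ∫ ℒ_k(f) dμ`. -/
noncomputable def dualRuelle (W : ℕ → Set ℕ) (A : ℕ → ℕ → ℕ → Prop) (φ : ℕ → Seq → ℝ)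
    (k : ℕ) (μ : Measure Seq) : Measure Seq :=
  Measure.sum fun a : ℕ =>
    (μ.withDensity fun x =>
      ENNReal.ofReal ((Sig W A k).indicator (fun y => Real.exp (φ k y)) (cons a x))).map (cons a)

/-- The iterated dual operator `(ℒ^n_k)^* = ℒ^*_k ∘ ⋯ ∘ ℒ^*_{k+n-1}`. -/
noncomputable def dualRuelleIter (W : ℕ → Set ℕ) (A : ℕ → ℕ → ℕ → Prop) (φ : ℕ → Seq → ℝ) :
    (k : ℕ) → ℕ → Measure Seq → Measure Seq
  | _, 0, μ => μ
  | k, n + 1, μ => dualRuelle W A φ k (dualRuelleIter W A φ (k + 1) n μ)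

/-- A non-stationary shift space `((Σ_n), T, (φ_n))` satisfying property `(H*)`, together
with the choices of the constants `β`, `n_k`, base letters `o_k`, mixing times `m_k`,
connecting words `u(x)` and lower bounds `C_k` used in the coupling construction. -/
structure HstarSystem where
  /-- the alphabets `𝒲¹_n` -/
  W : ℕ → Set ℕ
  /-- the transition matrices: `A n i j` iff `α^n_{ij} = 1` -/
  A : ℕ → ℕ → ℕ → Prop
  /-- the potentials `φ_n : Σ_n → ℝ` -/
  φ : ℕ → Seq → ℝ
  /-- the Hölder parameter -/
  r : ℝ
  /-- the parameter `β ∈ (0,1)` -/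
  β : ℝ
  /-- the Hölder constants `κ_n` of `φ_n` -/
  κ : ℕ → ℝ
  /-- the finite set `ℐ` from the big preimages property -/
  I : Finset ℕ
  /-- the infinite set `𝒦` from the big preimages property -/
  K : Set ℕ
  /-- the base letters `o_k ∈ 𝒲¹_k` -/
  o : ℕ → ℕ
  /-- the integers `n_k` -/
  nseq : ℕ → ℕ
  /-- the mixing times `m_k` -/
  mseq : ℕ → ℕ
  /-- the connecting words `u(x) ∈ 𝒲^{m_k}_k` (as sequences; only the first `m_k`
  symbols are relevant) -/
  u : ℕ → Seq → Seq
  /-- the constants `C_k` -/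
  Cseq : ℕ → ℝ
  hr : 0 < r ∧ r < 1
  hβ : 0 < β ∧ β < 1
  κnonneg : ∀ n, 0 ≤ κ n
  hKinf : K.Infinite
  /-- no zero rows -/
  row : ∀ n, ∀ i ∈ W n, ∃ j ∈ W (n + 1), A n i j
  /-- no zero columns -/
  col : ∀ n, ∀ i ∈ W (n + 1), ∃ j ∈ W n, A n j i
  /-- topological mixing -/
  mixing : ∀ k : ℕ, ∀ a ∈ W k, ∀ b : ℕ, ∃ N : ℕ, ∀ n, N ≤ n → b ∈ W (k + n) →
    ∃ x ∈ Sig W A k, x 0 = a ∧ x n = b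
  /-- big preimages along `𝒦` -/
  bigPre : ∀ n ∈ K, 1 ≤ n → ∀ a ∈ W n, ∃ b ∈ I, (b : ℕ) ∈ W (n - 1) ∧ A (n - 1) b a
  /-- `ℒ_n(1) = 1` -/
  normalized : ∀ k, ∀ x ∈ Sig W A (k + 1), Ruelle W A φ k (fun _ => 1) x = 1
  /-- `φ_n` is locally `(r,2)`-Hölder for `n ∉ 𝒦` -/
  holder2 : ∀ n ∉ K, HolderOn (Sig W A n) r (κ n) 2 (φ n)
  /-- `φ_n` is locally `(r,1)`-Hölder for `n ∈ 𝒦` -/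
  holder1 : ∀ n ∈ K, HolderOn (Sig W A n) r (κ n) 1 (φ n)
  ho : ∀ k, o k ∈ W k
  /-- `n_k ≥ ⌊−log α_k / log r⌋ + 1` where `α_k = B_k/β` -/
  hn : ∀ k, (⌊-Real.log (Bconst κ r k / β) / Real.log r⌋ + 1 : ℤ) ≤ (nseq k : ℤ)
  /-- `m_k ≥ 1`, `k + m_k ∈ 𝒦` -/
  hm_mem : ∀ k, 1 ≤ mseq k ∧ k + mseq k ∈ K
  /-- `(A_k ⋯ A_{k+m_k−2})_{o_k j} ≥ 1` for all `j ∈ ℐ ∩ 𝒲¹_{k+m_k−1}` -/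
  hm_conn : ∀ k, ∀ j ∈ I, (j : ℕ) ∈ W (k + mseq k - 1) →
    ∃ w : ℕ → ℕ, Adm W A k w (mseq k) ∧ w 0 = o k ∧ w (mseq k - 1) = j
  /-- minimality of `m_k` -/
  hm_min : ∀ k n, (1 ≤ n ∧ k + n ∈ K ∧ ∀ j ∈ I, (j : ℕ) ∈ W (k + n - 1) →
      ∃ w : ℕ → ℕ, Adm W A k w n ∧ w 0 = o k ∧ w (n - 1) = j) → mseq k ≤ n
  /-- the connecting word `u(x)` starts at `o_k`, ends in `ℐ`, and
  `x ∈ T^{m_k}([u(x)]_k)` -/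
  hu : ∀ k, ∀ x ∈ Sig W A (k + mseq k), prepend (u k x) (mseq k) x ∈ Sig W A k ∧
    u k x 0 = o k ∧ u k x (mseq k - 1) ∈ I
  hC_pos : ∀ k, 0 < Cseq k
  /-- `C_k` is a lower bound for `e^{S_{m_k} φ_k (τ_{u(x)} x)}` -/
  hC_le : ∀ k, ∀ x ∈ Sig W A (k + mseq k),
    Cseq k ≤ Real.exp (birkhoff φ k (mseq k) (prepend (u k x) (mseq k) x))

namespace HstarSystem

variable (S : HstarSystem)

/-- `α_k := B_k / β`. -/
noncomputable def alphaC (k : ℕ) : ℝ := Bconst S.κ S.r k / S.β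

/-- the metric `d̄_k(x,y) := min{1, α_k d_r(x,y)}`. -/
noncomputable def dbar (k : ℕ) (x y : Seq) : ℝ := min 1 (S.alphaC k * dr S.r x y)

/-- `s_k := 1 − (1 − r^{n_k} α_k) C_{k+n_k}/B_{k+n_k}`. -/
noncomputable def sconst (k : ℕ) : ℝ :=
  1 - (1 - S.r ^ S.nseq k * S.alphaC k) * S.Cseq (k + S.nseq k) / Bconst S.κ S.r (k + S.nseq k)

/-- `t_k := max{β, s_k}`. -/
noncomputable def tconst (k : ℕ) : ℝ := max S.β (S.sconst k)

/-- `l_k := n_k + m_{k+n_k}`. -/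
def lconst (k : ℕ) : ℕ := S.nseq k + S.mseq (k + S.nseq k)

end HstarSystem

/-- one-step transition weights -/
noncomputable def wt (S : HstarSystem) (k : ℕ) (x : Seq) (a : ℕ) : ℝ :=
  open scoped Classical in
  if cons a x ∈ Sig S.W S.A k then Real.exp (S.φ k (cons a x)) else 0

lemma wt_nonneg (S : HstarSystem) (k : ℕ) (x : Seq) (a : ℕ) : 0 ≤ wt S k x a := by
  unfold wt; split_ifs <;> positivity

lemma Ruelle_eq (S : HstarSystem) (k : ℕ) (g : Seq → ℝ) (x : Seq) :
    Ruelle S.W S.A S.φ k g x = ∑' a, wt S k x a * g (cons a x) := by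
  unfold Ruelle wt
  congr 1; ext a
  split_ifs <;> simp

lemma hasSum_wt (S : HstarSystem) (k : ℕ) (x : Seq) (hx : x ∈ Sig S.W S.A (k + 1)) :
    HasSum (wt S k x) 1 := by
  have h := S.normalized k x hx
  rw [Ruelle_eq] at h
  simp only [mul_one] at h
  have hs : Summable (wt S k x) := by
    by_contra hc
    have := tsum_eq_zero_of_not_summable hc
    rw [this] at h
    exact zero_ne_one h
  rw [← h]
  exact hs.hasSum

lemma hasSum_Ruelle (S : HstarSystem) (k : ℕ) (g : Seq → ℝ) (lo hi : ℝ)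
    (hg : ∀ z ∈ Sig S.W S.A k, lo ≤ g z ∧ g z ≤ hi)
    (x : Seq) (hx : x ∈ Sig S.W S.A (k + 1)) :
    HasSum (fun a => wt S k x a * g (cons a x)) (Ruelle S.W S.A S.φ k g x) := by
  rw [Ruelle_eq]
  apply Summable.hasSum
  apply Summable.of_norm_bounded (g := fun a => wt S k x a * (|lo| + |hi|))
  · exact (hasSum_wt S k x hx).summable.mul_right _
  · intro a
    rw [norm_mul, Real.norm_of_nonneg (wt_nonneg S k x a)]
    by_cases h : cons a x ∈ Sig S.W S.A k
    · apply mul_le_mul_of_nonneg_left _ (wt_nonneg S k x a)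
      obtain ⟨h1, h2⟩ := hg _ h
      rw [Real.norm_eq_abs, abs_le]
      have := neg_abs_le lo
      have := le_abs_self hi
      have := abs_nonneg lo
      have := abs_nonneg hi
      constructor <;> linarith
    · simp [wt, h]

lemma Ruelle_bounds (S : HstarSystem) (k : ℕ) (g : Seq → ℝ) (lo hi : ℝ)
    (hg : ∀ z ∈ Sig S.W S.A k, lo ≤ g z ∧ g z ≤ hi)
    (x : Seq) (hx : x ∈ Sig S.W S.A (k + 1)) :
    lo ≤ Ruelle S.W S.A S.φ k g x ∧ Ruelle S.W S.A S.φ k g x ≤ hi := by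
  have h := hasSum_Ruelle S k g lo hi hg x hx
  have hw := hasSum_wt S k x hx
  constructor
  · have := hasSum_le (fun a => ?_) (hw.mul_right lo) h
    · simpa using this
    · by_cases hc : cons a x ∈ Sig S.W S.A k
      · exact mul_le_mul_of_nonneg_left (hg _ hc).1 (wt_nonneg S k x a)
      · simp [wt, hc]
  · have := hasSum_le (fun a => ?_) h (hw.mul_right hi)
    · simpa using this
    · by_cases hc : cons a x ∈ Sig S.W S.A k
      · exact mul_le_mul_of_nonneg_left (hg _ hc).2 (wt_nonneg S k x a)
      · simp [wt, hc]

lemma iter_bounds (S : HstarSystem) (k : ℕ) (g : Seq → ℝ) (lo hi : ℝ)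
    (hg : ∀ z ∈ Sig S.W S.A k, lo ≤ g z ∧ g z ≤ hi) (n : ℕ) :
    ∀ z ∈ Sig S.W S.A (k + n), lo ≤ RuelleIter S.W S.A S.φ k n g z ∧
      RuelleIter S.W S.A S.φ k n g z ≤ hi := by
  induction n with
  | zero => simpa [RuelleIter] using hg
  | succ n ih =>
    intro z hz
    exact Ruelle_bounds S (k + n) _ lo hi ih z hz

lemma iter_add (S : HstarSystem) (k n m : ℕ) (g : Seq → ℝ) :
    RuelleIter S.W S.A S.φ k (n + m) g =
      RuelleIter S.W S.A S.φ (k + n) m (RuelleIter S.W S.A S.φ k n g) := by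
  induction m with
  | zero => rfl
  | succ m ih =>
    show Ruelle _ _ _ (k + (n + m)) (RuelleIter S.W S.A S.φ k (n + m) g) = _
    rw [ih, ← add_assoc]; rfl

lemma Ruelle_neg (S : HstarSystem) (k : ℕ) (g : Seq → ℝ) :
    Ruelle S.W S.A S.φ k (fun z => - g z) = fun x => - Ruelle S.W S.A S.φ k g x := by
  ext x
  rw [Ruelle_eq, Ruelle_eq, ← tsum_neg]
  simp

lemma iter_neg (S : HstarSystem) (k n : ℕ) (g : Seq → ℝ) :
    RuelleIter S.W S.A S.φ k n (fun z => - g z) =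
      fun x => - RuelleIter S.W S.A S.φ k n g x := by
  induction n with
  | zero => rfl
  | succ n ih =>
    simp only [RuelleIter]
    rw [ih, Ruelle_neg]

lemma cons_mem (S : HstarSystem) (k : ℕ) (x : Seq) (hx : x ∈ Sig S.W S.A (k + 1)) (a : ℕ) :
    cons a x ∈ Sig S.W S.A k ↔ a ∈ S.W k ∧ S.A k a (x 0) := by
  constructor
  · rintro ⟨h1, h2⟩
    exact ⟨h1 0, h2 0⟩
  · rintro ⟨h1, h2⟩
    refine ⟨fun i => ?_, fun i => ?_⟩
    · cases i with
      | zero => exact h1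
      | succ i =>
        have := hx.1 i
        rwa [show k + 1 + i = k + (i + 1) by ring] at this
    · cases i with
      | zero => exact h2
      | succ i =>
        have := hx.2 i
        rwa [show k + 1 + i = k + (i + 1) by ring] at this

lemma logB_succ (κ : ℕ → ℝ) (r : ℝ) (m : ℕ) :
    logB κ r (m + 1) = r * (κ m + logB κ r m) := by
  unfold logB
  have h : ∀ m, ∑ i ∈ Finset.Icc 1 m, κ (m - i) * r ^ i =
      ∑ i ∈ Finset.range m, κ (m - (i + 1)) * r ^ (i + 1) := by
    intro m
    rw [Finset.range_eq_Ico, Finset.sum_Ico_add' (fun i => κ (m - i) * r ^ i) 0 m 1]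
    rfl
  rw [h, h, Finset.sum_range_succ', mul_add, Finset.mul_sum, add_comm]
  congr 1
  · simp [mul_comm]
  · refine Finset.sum_congr rfl fun i _ => ?_
    rw [show m + 1 - (i + 1 + 1) = m - (i + 1) by omega]
    ring

lemma logB_nonneg (S : HstarSystem) (m : ℕ) : 0 ≤ logB S.κ S.r m :=
  Finset.sum_nonneg fun i _ => mul_nonneg (S.κnonneg _) (pow_nonneg S.hr.1.le _)

lemma phi_holder (S : HstarSystem) (k j : ℕ) (hj : 2 ≤ j) (x y : Seq)
    (hx : x ∈ Sig S.W S.A k) (hy : y ∈ Sig S.W S.A k) (h : agrees x y j) :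
    |S.φ k x - S.φ k y| ≤ S.κ k * S.r ^ j := by
  by_cases hk : k ∈ S.K
  · exact S.holder1 k hk j (by omega) x hx y hy h
  · exact S.holder2 k hk j hj x hx y hy h

lemma agrees_cons (x y : Seq) (j a : ℕ) (h : agrees x y j) :
    agrees (cons a x) (cons a y) (j + 1) := by
  intro i hi
  cases i with
  | zero => rfl
  | succ i => exact h i (by omega)

lemma agrees_symm {x y : Seq} {j : ℕ} (h : agrees x y j) : agrees y x j :=
  fun i hi => (h i hi).symm

/-- one-step coupling estimate -/
lemma step (S : HstarSystem) (k j : ℕ) (hj : 1 ≤ j) (g : Seq → ℝ) (lo L D : ℝ)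
    (hg : ∀ z ∈ Sig S.W S.A k, lo ≤ g z ∧ g z ≤ lo + L)
    (hD : ∀ z ∈ Sig S.W S.A k, ∀ z' ∈ Sig S.W S.A k, agrees z z' (j + 1) → g z - g z' ≤ D)
    (x y : Seq) (hx : x ∈ Sig S.W S.A (k + 1)) (hy : y ∈ Sig S.W S.A (k + 1))
    (hxy : agrees x y j) :
    Ruelle S.W S.A S.φ k g x - Ruelle S.W S.A S.φ k g y ≤
      L - Real.exp (-(S.κ k * S.r ^ (j + 1))) * (L - D) := by
  set q := Real.exp (-(S.κ k * S.r ^ (j + 1))) with hq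
  have hq1 : q ≤ 1 := by
    rw [hq, Real.exp_le_one_iff, neg_nonpos]
    exact mul_nonneg (S.κnonneg _) (pow_nonneg S.hr.1.le _)
  have hq0 : 0 < q := Real.exp_pos _
  have wx := hasSum_wt S k x hx
  have wy := hasSum_wt S k y hy
  have gx := hasSum_Ruelle S k g lo (lo + L) hg x hx
  have gy := hasSum_Ruelle S k g lo (lo + L) hg y hy
  have hR := ((wx.sub (wy.mul_left q)).mul_right (lo + L)).add
    ((wy.mul_left q).mul_right D |>.sub ((wy.mul_left (1 - q)).mul_right lo))
  have := hasSum_le (fun a => ?_) (gx.sub gy) hR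
  · refine this.trans (le_of_eq ?_); ring
  · have h0 : x 0 = y 0 := hxy 0 (by omega)
    by_cases hc : cons a x ∈ Sig S.W S.A k
    · have hc' : cons a y ∈ Sig S.W S.A k := by
        rw [cons_mem S k y hy, ← h0, ← cons_mem S k x hx]; exact hc
      have hag := agrees_cons x y j a hxy
      have hw : q * wt S k y a ≤ wt S k x a := by
        simp only [wt, hc, hc', if_true]
        rw [hq, ← Real.exp_add, Real.exp_le_exp]
        have := abs_le.1 (phi_holder S k (j + 1) (by omega) _ _ hc hc' hag)
        linarith [this.1]
      have hw0 := wt_nonneg S k y a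
      have e1 := mul_nonneg (sub_nonneg.2 hw) (sub_nonneg.2 (hg _ hc).2)
      have e2 := mul_nonneg (mul_nonneg hq0.le hw0) (sub_nonneg.2 (hD _ hc _ hc' hag))
      have e3 := mul_nonneg (mul_nonneg (sub_nonneg.2 hq1) hw0) (sub_nonneg.2 (hg _ hc').1)
      nlinarith [e1, e2, e3]
    · have hc' : cons a y ∉ Sig S.W S.A k := by
        rw [cons_mem S k y hy, ← h0, ← cons_mem S k x hx]; exact hc
      simp [wt, hc, hc']

lemma iter_local (S : HstarSystem) (k : ℕ) (f : Seq → ℝ) (lo L α : ℝ) (hL : 0 ≤ L)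
    (hg : ∀ z ∈ Sig S.W S.A k, lo ≤ f z ∧ f z ≤ lo + L)
    (hf : ∀ j, ∀ z ∈ Sig S.W S.A k, ∀ z' ∈ Sig S.W S.A k, agrees z z' j →
      f z - f z' ≤ L * (α * S.r ^ j)) (n : ℕ) :
    ∀ j, 1 ≤ j → α * S.r ^ (n + j) ≤ 1 →
    ∀ x ∈ Sig S.W S.A (k + n), ∀ y ∈ Sig S.W S.A (k + n), agrees x y j →
      RuelleIter S.W S.A S.φ k n f x - RuelleIter S.W S.A S.φ k n f y ≤
        L * (1 - (1 - α * S.r ^ (n + j)) * Real.exp (-(logB S.κ S.r (k + n) * S.r ^ j))) := by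
  induction n with
  | zero =>
    intro j hj ha x hx y hy hxy
    simp only [zero_add, add_zero, RuelleIter] at *
    refine (hf j x hx y hy hxy).trans (mul_le_mul_of_nonneg_left ?_ hL)
    have h1 : Real.exp (-(logB S.κ S.r k * S.r ^ j)) ≤ 1 := by
      rw [Real.exp_le_one_iff, neg_nonpos]
      exact mul_nonneg (logB_nonneg S k) (pow_nonneg S.hr.1.le _)
    nlinarith
  | succ n ih =>
    intro j hj ha x hx y hy hxy
    have e : n + 1 + j = n + (j + 1) := by ring
    rw [e] at ha ⊢
    refine (step S (k + n) j hj _ lo L _ (iter_bounds S k f lo _ hg n)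
      (ih (j + 1) (by omega) ha) x y hx hy hxy).trans (le_of_eq ?_)
    rw [← add_assoc k n 1, logB_succ]
    rw [show -(S.r * (S.κ (k + n) + logB S.κ S.r (k + n)) * S.r ^ j) =
      -(S.κ (k + n) * S.r ^ (j + 1)) + -(logB S.κ S.r (k + n) * S.r ^ (j + 1)) by ring,
      Real.exp_add]
    ring

lemma shift_iter (m : ℕ) (z : Seq) : shift^[m] z = fun i => z (m + i) := by
  induction m generalizing z with
  | zero => simp
  | succ m ih =>
    rw [Function.iterate_succ_apply, ih]
    ext i
    simp only [shift]
    congr 1; ring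

lemma shift_mem (S : HstarSystem) (k m : ℕ) (z : Seq) (hz : z ∈ Sig S.W S.A k) :
    shift^[m] z ∈ Sig S.W S.A (k + m) := by
  rw [shift_iter]
  refine ⟨fun i => ?_, fun i => ?_⟩
  · rw [add_assoc]; exact hz.1 _
  · rw [add_assoc]; exact hz.2 (m + i)

lemma prepend_succ (w : ℕ → ℕ) (m : ℕ) (x : Seq) :
    prepend w (m + 1) x = prepend w m (cons (w m) x) := by
  ext i
  unfold prepend
  rcases lt_trichotomy i m with h | h | h
  · rw [if_pos (by omega), if_pos h]
  · subst h; simp [cons]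
  · rw [if_neg (by omega), if_neg (by omega)]
    obtain ⟨c, rfl⟩ : ∃ c, i = m + 1 + c := ⟨i - (m + 1), by omega⟩
    rw [show m + 1 + c - (m + 1) = c by omega, show m + 1 + c - m = c + 1 by omega]
    rfl

lemma shift_prepend (w : ℕ → ℕ) (m : ℕ) (x : Seq) : shift^[m] (prepend w m x) = x := by
  rw [shift_iter]
  ext i
  simp [prepend]

lemma iter_lower (S : HstarSystem) (k : ℕ) (g : Seq → ℝ) (lo hi : ℝ)
    (hg : ∀ z ∈ Sig S.W S.A k, lo ≤ g z ∧ g z ≤ hi) (w : ℕ → ℕ) (m : ℕ) :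
    ∀ x ∈ Sig S.W S.A (k + m), prepend w m x ∈ Sig S.W S.A k →
      Real.exp (birkhoff S.φ k m (prepend w m x)) * (g (prepend w m x) - lo) ≤
        RuelleIter S.W S.A S.φ k m g x - lo := by
  induction m with
  | zero =>
    intro x hx hz
    have : prepend w 0 x = x := by ext i; simp [prepend]
    simp [this, birkhoff, RuelleIter]
  | succ m ih =>
    intro x hx hz
    rw [prepend_succ] at hz ⊢
    have hs := shift_prepend w m (cons (w m) x)
    have hc : cons (w m) x ∈ Sig S.W S.A (k + m) := by
      rw [← hs]; exact shift_mem S k m _ hz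
    have h1 := ih _ hc hz
    have hb := iter_bounds S k g lo hi hg m
    have gx := hasSum_Ruelle S (k + m) _ lo hi hb x hx
    have wx := (hasSum_wt S (k + m) x hx).mul_right lo
    have hd := gx.sub wx
    have h2 := le_hasSum hd (w m) (fun a _ => by
      by_cases hca : cons a x ∈ Sig S.W S.A (k + m)
      · have := mul_nonneg (wt_nonneg S (k + m) x a) (sub_nonneg.2 (hb _ hca).1)
        linarith
      · simp [wt, hca])
    have hbk : birkhoff S.φ k (m + 1) (prepend w m (cons (w m) x)) =
        S.φ (k + m) (cons (w m) x) + birkhoff S.φ k m (prepend w m (cons (w m) x)) := by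
      unfold birkhoff
      rw [Finset.sum_range_succ, hs, add_comm]
    rw [hbk, Real.exp_add, mul_assoc]
    have hw : wt S (k + m) x (w m) = Real.exp (S.φ (k + m) (cons (w m) x)) := by
      simp [wt, hc]
    rw [hw, one_mul] at h2
    have h3 := mul_le_mul_of_nonneg_left h1 (Real.exp_pos (S.φ (k + m) (cons (w m) x))).le
    refine h3.trans ?_
    show _ ≤ Ruelle S.W S.A S.φ (k + m) _ x - lo
    linarith

lemma dr_cases (r : ℝ) (x y : Seq) (h : x ≠ y) : ∃ j, dr r x y = r ^ j ∧ agrees x y j := by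
  refine ⟨sInf {i | x i ≠ y i}, by simp [dr, h], fun i hi => ?_⟩
  by_contra hc
  exact absurd (Nat.sInf_le (show i ∈ {i | x i ≠ y i} from hc)) (by omega)

lemma dr_le (r : ℝ) (h0 : 0 < r) (h1 : r < 1) (x y : Seq) (j : ℕ) (h : agrees x y j) :
    dr r x y ≤ r ^ j := by
  unfold dr
  split_ifs with hxy
  · positivity
  · apply pow_le_pow_of_le_one h0.le h1.le
    have hne : {i | x i ≠ y i}.Nonempty := by
      by_contra hc
      apply hxy
      ext i
      by_contra hi
      exact hc ⟨i, hi⟩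
    have := Nat.sInf_mem hne
    by_contra hc
    exact this (h _ (by omega))

lemma dr_nonneg (r : ℝ) (h0 : 0 < r) (x y : Seq) : 0 ≤ dr r x y := by
  unfold dr
  split_ifs <;> positivity

lemma one_lt_alpha (S : HstarSystem) (k : ℕ) : 1 < S.alphaC k := by
  unfold HstarSystem.alphaC Bconst
  rw [lt_div_iff₀ S.hβ.1, one_mul]
  exact S.hβ.2.trans_le (Real.one_le_exp (logB_nonneg S k))

lemma alpha_pow (S : HstarSystem) (k : ℕ) : S.r ^ S.nseq k * S.alphaC k < 1 := by
  have ha := one_lt_alpha S k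
  have h := S.hn k
  have hl : Real.log S.r < 0 := Real.log_neg S.hr.1 S.hr.2
  have h1 : -Real.log (S.alphaC k) / Real.log S.r < S.nseq k := by
    have h2 := Int.lt_floor_add_one (-Real.log (Bconst S.κ S.r k / S.β) / Real.log S.r)
    have h3 : ((⌊-Real.log (Bconst S.κ S.r k / S.β) / Real.log S.r⌋ + 1 : ℤ) : ℝ) ≤
      ((S.nseq k : ℤ) : ℝ) := by exact_mod_cast h
    push_cast at h3
    exact h2.trans_le h3
  rw [div_lt_iff_of_neg hl] at h1
  rw [← Real.log_neg_iff (mul_pos (pow_pos S.hr.1 _) (by linarith)),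
    Real.log_mul (pow_pos S.hr.1 _).ne' (by linarith), Real.log_pow]
  linarith

lemma t_bounds (S : HstarSystem) (k : ℕ) : 0 < S.tconst k ∧ S.tconst k < 1 := by
  refine ⟨lt_max_of_lt_left S.hβ.1, max_lt S.hβ.2 ?_⟩
  unfold HstarSystem.sconst
  have := alpha_pow S k
  have : 0 < (1 - S.r ^ S.nseq k * S.alphaC k) * S.Cseq (k + S.nseq k) /
      Bconst S.κ S.r (k + S.nseq k) :=
    div_pos (mul_pos (by linarith) (S.hC_pos _)) (Real.exp_pos _)
  linarith

lemma dbar_nonneg (S : HstarSystem) (k : ℕ) (x y : Seq) : 0 ≤ S.dbar k x y :=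
  le_min zero_le_one (mul_nonneg (by linarith [one_lt_alpha S k]) (dr_nonneg _ S.hr.1 _ _))

lemma lip_attained (S : HstarSystem) (k : ℕ) (f : Seq → ℝ) (κf Mf : ℝ)
    (hf : HolderOn (Sig S.W S.A k) S.r κf 1 f)
    (hMf : ∀ x ∈ Sig S.W S.A k, |f x| ≤ Mf) :
    0 ≤ LipC (Sig S.W S.A k) (S.dbar k) f ∧ ∀ x ∈ Sig S.W S.A k, ∀ y ∈ Sig S.W S.A k,
      |f x - f y| ≤ LipC (Sig S.W S.A k) (S.dbar k) f * S.dbar k x y := by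
  have hne : {K : ℝ | 0 ≤ K ∧ ∀ x ∈ Sig S.W S.A k, ∀ y ∈ Sig S.W S.A k,
      |f x - f y| ≤ K * S.dbar k x y}.Nonempty := by
    refine ⟨2 * |Mf| + |κf|, by positivity, fun x hx y hy => ?_⟩
    by_cases hxy : x = y
    · subst hxy
      simp only [sub_self, abs_zero]
      exact mul_nonneg (by positivity) (dbar_nonneg _ _ _ _)
    obtain ⟨j, hj, ha⟩ := dr_cases S.r x y hxy
    have hα := one_lt_alpha S k
    have hr := pow_pos S.hr.1 j
    have hM := abs_nonneg Mf
    have hκ := abs_nonneg κf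
    unfold HstarSystem.dbar
    rw [hj]
    have h2M : |f x - f y| ≤ 2 * |Mf| := by
      have := abs_sub (f x) (f y)
      linarith [hMf x hx, hMf y hy, le_abs_self Mf]
    rcases le_total 1 (S.alphaC k * S.r ^ j) with h | h
    · rw [min_eq_left h]; linarith
    · rw [min_eq_right h]
      have hj1 : 1 ≤ j := by
        by_contra hc
        have : j = 0 := by omega
        subst this
        simp at h; linarith
      have h1 := hf j hj1 x hx y hy ha
      have h3 : κf * S.r ^ j ≤ |κf| * S.r ^ j :=
        mul_le_mul_of_nonneg_right (le_abs_self _) hr.le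
      have h4 : |κf| * S.r ^ j ≤ |κf| * (S.alphaC k * S.r ^ j) :=
        mul_le_mul_of_nonneg_left (by nlinarith) hκ
      have h5 : 0 ≤ 2 * |Mf| * (S.alphaC k * S.r ^ j) := by positivity
      linarith
  refine ⟨le_csInf hne fun K hK => hK.1, fun x hx y hy => ?_⟩
  rcases (dbar_nonneg S k x y).eq_or_lt with h | h
  · obtain ⟨K, hK⟩ := hne
    have := hK.2 x hx y hy
    rw [← h] at this ⊢
    simpa using this
  · rw [← div_le_iff₀ h]
    exact le_csInf hne fun K hK => (div_le_iff₀ h).2 (hK.2 x hx y hy)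

lemma main_bound (S : HstarSystem) (k : ℕ) (f : Seq → ℝ) (L : ℝ) (hL : 0 ≤ L)
    (hLip : ∀ x ∈ Sig S.W S.A k, ∀ y ∈ Sig S.W S.A k, |f x - f y| ≤ L * S.dbar k x y)
    (x y : Seq) (hx : x ∈ Sig S.W S.A (k + S.lconst k)) (hy : y ∈ Sig S.W S.A (k + S.lconst k)) :
    RuelleIter S.W S.A S.φ k (S.lconst k) f x - RuelleIter S.W S.A S.φ k (S.lconst k) f y ≤
      S.tconst k * L * S.dbar (k + S.lconst k) x y := by
  by_cases hxy : x = y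
  · subst hxy
    simp only [sub_self]
    exact mul_nonneg (mul_nonneg (t_bounds S k).1.le hL) (dbar_nonneg _ _ _ _)
  obtain ⟨j, hj, ha⟩ := dr_cases S.r x y hxy
  have hα := one_lt_alpha S k
  have hr0 := S.hr.1
  have hr1 := S.hr.2
  have hαn := alpha_pow S k
  obtain ⟨lo, hlo⟩ : ∃ lo, ∀ z ∈ Sig S.W S.A k, lo ≤ f z ∧ f z ≤ lo + L := by
    have h1 : ∀ z ∈ Sig S.W S.A k, ∀ z' ∈ Sig S.W S.A k, f z - f z' ≤ L := fun z hz z' hz' =>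
      (le_abs_self _).trans ((hLip z hz z' hz').trans
        (mul_le_of_le_one_right hL (min_le_left _ _)))
    refine ⟨sInf (f '' Sig S.W S.A k), fun z hz => ⟨csInf_le ⟨f z - L, ?_⟩ ⟨z, hz, rfl⟩, ?_⟩⟩
    · rintro _ ⟨z', hz', rfl⟩
      linarith [h1 z hz z' hz']
    · have : f z - L ≤ sInf (f '' Sig S.W S.A k) := by
        refine le_csInf ⟨_, z, hz, rfl⟩ ?_
        rintro _ ⟨z', hz', rfl⟩
        linarith [h1 z hz z' hz']
      linarith
  have hloc : ∀ j, ∀ z ∈ Sig S.W S.A k, ∀ z' ∈ Sig S.W S.A k, agrees z z' j →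
      f z - f z' ≤ L * (S.alphaC k * S.r ^ j) := fun j z hz z' hz' h =>
    (le_abs_self _).trans ((hLip z hz z' hz').trans (mul_le_mul_of_nonneg_left
      ((min_le_right _ _).trans
        (mul_le_mul_of_nonneg_left (dr_le _ hr0 hr1 _ _ _ h) (by linarith))) hL))
  have hiter := iter_local S k f lo L (S.alphaC k) hL hlo hloc
  unfold HstarSystem.dbar
  rw [hj]
  rcases le_or_gt 1 (S.alphaC (k + S.lconst k) * S.r ^ j) with h | h
  · rw [min_eq_left h, mul_one]
    unfold HstarSystem.lconst at *
    set n := S.nseq k with hn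
    set m := S.mseq (k + n) with hm
    rw [← add_assoc] at hx hy
    rw [iter_add]
    have hb := iter_bounds S k f lo _ hlo n
    set g := RuelleIter S.W S.A S.φ k n f with hg
    obtain ⟨zx, ux, -⟩ := S.hu (k + n) x hx
    obtain ⟨zy, uy, -⟩ := S.hu (k + n) y hy
    have Cx := S.hC_le (k + n) x hx
    have Cy := S.hC_le (k + n) y hy
    have m1 := (S.hm_mem (k + n)).1
    have hneg : ∀ z ∈ Sig S.W S.A (k + n), -(lo + L) ≤ (fun z => - g z) z ∧
        (fun z => - g z) z ≤ -lo := fun z hz => by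
      have := hb z hz
      constructor <;> simp only [] <;> linarith
    have bx := iter_lower S (k + n) (fun z => - g z) _ _ hneg (S.u (k + n) x) m x hx zx
    have by' := iter_lower S (k + n) g _ _ hb (S.u (k + n) y) m y hy zy
    rw [iter_neg] at bx
    rw [← hm] at zx zy Cx Cy m1
    set z := prepend (S.u (k + n) x) m x
    set z' := prepend (S.u (k + n) y) m y
    have hag : agrees z z' 1 := by
      intro i hi
      have : i = 0 := by omega
      subst this
      show prepend _ _ _ _ = prepend _ _ _ _
      simp only [prepend]
      rw [if_pos (by omega), if_pos (by omega), ux, uy]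
    have hα1 : S.alphaC k * S.r ^ (n + 1) ≤ S.r ^ n * S.alphaC k := by
      rw [pow_succ]
      have : 0 < S.r ^ n * S.alphaC k := by positivity
      nlinarith
    have hzz := hiter n 1 le_rfl (by linarith) z zx z' zy hag
    have hF := logB_nonneg S (k + n)
    have hE : (Bconst S.κ S.r (k + n))⁻¹ ≤ Real.exp (-(logB S.κ S.r (k + n) * S.r ^ 1)) := by
      rw [Bconst, ← Real.exp_neg, Real.exp_le_exp]
      nlinarith
    have hBi : 0 < (Bconst S.κ S.r (k + n))⁻¹ := inv_pos.2 (Real.exp_pos _)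
    have hCp := S.hC_pos (k + n)
    have hbz := hb z zx
    have hbz' := hb z' zy
    have k1 := mul_le_mul_of_nonneg_right Cx (sub_nonneg.2 hbz.2)
    have k2 := mul_le_mul_of_nonneg_right Cy (sub_nonneg.2 hbz'.1)
    have k3 : (1 - S.r ^ n * S.alphaC k) * (Bconst S.κ S.r (k + n))⁻¹ ≤
        (1 - S.alphaC k * S.r ^ (n + 1)) * Real.exp (-(logB S.κ S.r (k + n) * S.r ^ 1)) :=
      mul_le_mul (by linarith) hE hBi.le (by linarith)
    have k4 : g z - g z' ≤ L * (1 - (1 - S.r ^ n * S.alphaC k) * (Bconst S.κ S.r (k + n))⁻¹) :=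
      hzz.trans (mul_le_mul_of_nonneg_left (by linarith) hL)
    have k5 := mul_le_mul_of_nonneg_left k4 hCp.le
    have k6 : S.sconst k * L ≤ S.tconst k * L :=
      mul_le_mul_of_nonneg_right (le_max_right _ _) hL
    refine le_trans ?_ k6
    unfold HstarSystem.sconst
    rw [← hn, div_eq_mul_inv]
    simp only [] at bx
    linarith
  · rw [min_eq_right h.le]
    have hj1 : 1 ≤ j := by
      by_contra hc
      have : j = 0 := by omega
      subst this
      have := one_lt_alpha S (k + S.lconst k)
      simp at h; linarith
    set l := S.lconst k with hl
    have hrj := pow_pos hr0 j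
    have hl1 : S.alphaC k * S.r ^ l ≤ 1 := by
      have : S.r ^ l ≤ S.r ^ S.nseq k :=
        pow_le_pow_of_le_one hr0.le hr1.le (by rw [hl]; unfold HstarSystem.lconst; omega)
      nlinarith
    have hl2 : S.alphaC k * S.r ^ (l + j) ≤ S.r ^ j := by
      rw [pow_add]; nlinarith
    have hl3 : S.r ^ j ≤ 1 := pow_le_one₀ hr0.le hr1.le
    refine (hiter l j hj1 (by linarith) x hx y hy ha).trans ?_
    have hF := logB_nonneg S (k + l)
    have e1 := Real.add_one_le_exp (-(logB S.κ S.r (k + l) * S.r ^ j))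
    have e2 : Real.exp (-(logB S.κ S.r (k + l) * S.r ^ j)) ≤ 1 := by
      rw [Real.exp_le_one_iff, neg_nonpos]; positivity
    have e3 := Real.add_one_le_exp (logB S.κ S.r (k + l))
    have e4 : 0 < S.alphaC k * S.r ^ (l + j) := by positivity
    have e5 : 1 - (1 - S.alphaC k * S.r ^ (l + j)) *
        Real.exp (-(logB S.κ S.r (k + l) * S.r ^ j)) ≤ Bconst S.κ S.r (k + l) * S.r ^ j := by
      unfold Bconst
      nlinarith
    have e6 : Bconst S.κ S.r (k + l) = S.β * S.alphaC (k + l) := by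
      unfold HstarSystem.alphaC
      field_simp [S.hβ.1.ne']
    have e7 : S.β ≤ S.tconst k := le_max_left _ _
    have hα' := one_lt_alpha S (k + l)
    calc _ ≤ L * (Bconst S.κ S.r (k + l) * S.r ^ j) := mul_le_mul_of_nonneg_left e5 hL
      _ = S.β * (L * (S.alphaC (k + l) * S.r ^ j)) := by rw [e6]; ring
      _ ≤ S.tconst k * (L * (S.alphaC (k + l) * S.r ^ j)) :=
        mul_le_mul_of_nonneg_right e7 (by positivity)
      _ = _ := by ring

lemma dbar_symm (S : HstarSystem) (k : ℕ) (x y : Seq) : S.dbar k x y = S.dbar k y x := by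
  unfold HstarSystem.dbar dr
  by_cases h : x = y
  · subst h; rfl
  · have h2 : ¬ y = x := fun e => h e.symm
    rw [if_neg h, if_neg h2]
    simp only [ne_comm]

/-- (Lemma, part (ii).) Under property `(H*)`, with `l_k = n_k + m_{k+n_k}`,
the Ruelle iterate over `l_k` steps contracts the Lipschitz constant with respect to the
metrics `d̄` by the factor `t_k = max{β, 1 − (1 − r^{n_k} α_k) C_{k+n_k}/B_{k+n_k}} ∈ (0,1)`. -/
theorem ruelle_iter_lipschitz_contraction (S : HstarSystem) (k : ℕ)
    (f : Seq → ℝ) (κf Mf : ℝ)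
    (hf : HolderOn (Sig S.W S.A k) S.r κf 1 f)
    (hMf : ∀ x ∈ Sig S.W S.A k, |f x| ≤ Mf) :
    0 < S.tconst k ∧ S.tconst k < 1 ∧
      LipC (Sig S.W S.A (k + S.lconst k)) (S.dbar (k + S.lconst k))
          (RuelleIter S.W S.A S.φ k (S.lconst k) f) ≤
        S.tconst k * LipC (Sig S.W S.A k) (S.dbar k) f := by
  refine ⟨(t_bounds S k).1, (t_bounds S k).2, ?_⟩
  obtain ⟨hL, hLip⟩ := lip_attained S k f κf Mf hf hMf
  refine csInf_le ⟨0, fun K hK => hK.1⟩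
    ⟨mul_nonneg (t_bounds S k).1.le hL, fun x hx y hy => ?_⟩
  rw [abs_sub_le_iff]
  refine ⟨main_bound S k f _ hL hLip x y hx hy, ?_⟩
  rw [dbar_symm]
  exact main_bound S k f _ hL hLip y x hy hx


end NSShift
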